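/- In the Poissonized model with parameter λ > 0 and any k ∈ ℕ: E[2 X_k(λ) − X_{k+1}(λ)] ≥ Σ_{r ∈ {0,1}^k} P(Po(λP_r) = 2), where P_r = p^{#ones(r)} q^{k − #ones(r)}. (This follows from the pointwise inequalities I_{r0} + I_{r1} ≤ I_r, with strict inequality I_{r0} + I_{r1} ≤ 1 < 2I_r whenever exactly two or three inserted strings have prefix r.) -/

import Mathlib

/-!
Poissonized model for partial fillup in tries (Janson–Szpankowski).

An outcome `ω : ℕ × (ℕ → ℕ → Bool)` consists of the number `ω.1 = N` of inserted
strings and a source `ω.2` of infinitely many strings, where `ω.2 i j` is the `j`-th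
bit of the `i`-th string; the inserted strings are the strings `0, …, N-1`.  Under the
Poissonized measure, `N ~ Po(λ)` is independent of the strings, and all bits are
i.i.d. with `P(bit = 1) = p`.
-/

open MeasureTheory ProbabilityTheory Real Filter

/-- The number of strings among the first `n` (encoded in `ω`) whose first `k` bits
form the word `r ∈ {0,1}^k`. -/
def prefCount (ω : ℕ → ℕ → Bool) (n k : ℕ) (r : Fin k → Bool) : ℕ :=
  ((Finset.range n).filter fun i => ∀ j : Fin k, ω i j = r j).card

/-- `X_k`: the number of words `r ∈ {0,1}^k` that are prefixes of at least two of the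
first `n` strings. -/
def fillCount (ω : ℕ → ℕ → Bool) (n k : ℕ) : ℕ :=
  (Finset.univ.filter fun r : Fin k → Bool => 2 ≤ prefCount ω n k r).card

/-- `ν` is a probability measure on `ℕ → ℕ → Bool` under which all the bits
`ω i j` are i.i.d. with `P(bit = 1) = p` (characterized by cylinder probabilities). -/
def IIDBits (p : ℝ) (ν : Measure (ℕ → ℕ → Bool)) : Prop :=
  IsProbabilityMeasure ν ∧
    ∀ (S : Finset (ℕ × ℕ)) (b : ℕ × ℕ → Bool),
      ν {ω | ∀ s ∈ S, ω s.1 s.2 = b s} =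
        ∏ s ∈ S, ENNReal.ofReal (if b s then p else 1 - p)

/-- The Poissonized model: the number of inserted strings is `Po(λ)`, independent of the
i.i.d. source `ν` of strings. -/
noncomputable def poModel (lam : NNReal) (ν : Measure (ℕ → ℕ → Bool)) :
    Measure (ℕ × (ℕ → ℕ → Bool)) :=
  (ProbabilityTheory.poissonMeasure lam).prod ν

/-- `X_k(λ)` as a random variable on the Poissonized model: the number of words
`r ∈ {0,1}^k` that are prefixes of at least two of the `N` inserted strings. -/
def fillCountPo (k : ℕ) (ω : ℕ × (ℕ → ℕ → Bool)) : ℕ :=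
  fillCount ω.2 ω.1 k

/-- `X̄_k(λ) = X_k(λ) / 2^k`. -/
noncomputable def fracFilledPo (k : ℕ) (ω : ℕ × (ℕ → ℕ → Bool)) : ℝ :=
  (fillCountPo k ω : ℝ) / 2 ^ k

/-- The number of ones in the word `r ∈ {0,1}^k`. -/
def onesCount {k : ℕ} (r : Fin k → Bool) : ℕ :=
  (Finset.univ.filter fun j => r j = true).card

/-- `P_r = p^{#ones(r)} q^{k - #ones(r)}`, the probability that a random string begins
with the word `r`. -/
noncomputable def wordProb (p q : ℝ) {k : ℕ} (r : Fin k → Bool) : ℝ :=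
  p ^ onesCount r * q ^ (k - onesCount r)

lemma measurableSet_word (k : ℕ) (r : Fin k → Bool) (i : ℕ) :
    MeasurableSet {ω : ℕ → ℕ → Bool | ∀ j : Fin k, ω i j = r j} := by
  rw [Set.ofPred_forall]
  refine MeasurableSet.iInter fun j => ?_
  have : Measurable fun ω : ℕ → ℕ → Bool => ω i j := by fun_prop
  exact this (measurableSet_singleton (r j))

lemma measurable_prefCount (n k : ℕ) (r : Fin k → Bool) :
    Measurable fun ω : ℕ → ℕ → Bool => prefCount ω n k r := by
  unfold prefCount
  simp_rw [Finset.card_filter]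
  refine Finset.measurable_sum _ fun i _ => ?_
  exact Measurable.ite (measurableSet_word k r i) measurable_const measurable_const

lemma measurable_fillCountPo (k : ℕ) : Measurable (fillCountPo k) := by
  refine measurable_from_prod_countable_right fun n => ?_
  unfold fillCountPo fillCount
  simp_rw [Finset.card_filter]
  refine Finset.measurable_sum _ fun r _ => ?_
  refine Measurable.ite ?_ measurable_const measurable_const
  exact measurable_prefCount n k r measurableSet_Ici

lemma fillCountPo_le (k : ℕ) (ω) : fillCountPo k ω ≤ 2 ^ k := by
  unfold fillCountPo fillCount
  refine (Finset.card_le_univ _).trans ?_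
  simp

/-- The strings with prefix `r` split according to the next bit. -/
lemma prefCount_split (ω : ℕ → ℕ → Bool) (n k : ℕ) (r : Fin k → Bool) :
    prefCount ω n (k + 1) (Fin.snoc r true : Fin (k + 1) → Bool)
      + prefCount ω n (k + 1) (Fin.snoc r false : Fin (k + 1) → Bool) = prefCount ω n k r := by
  unfold prefCount
  simp_rw [Finset.card_filter, ← Finset.sum_add_distrib]
  refine Finset.sum_congr rfl fun i _ => ?_
  simp only [Fin.forall_fin_succ', Fin.snoc_castSucc, Fin.snoc_last, Fin.val_castSucc,
    Fin.val_last]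
  cases ω i k <;> simp

lemma pointwise_bound (ω : ℕ → ℕ → Bool) (n k : ℕ) :
    fillCount ω n (k + 1) + ∑ r : Fin k → Bool, (if prefCount ω n k r = 2 then 1 else 0)
      ≤ 2 * fillCount ω n k := by
  unfold fillCount
  simp_rw [Finset.card_filter]
  rw [← (Fin.snocEquiv (fun _ : Fin (k + 1) => Bool)).sum_comp, Fintype.sum_prod_type_right,
    ← Finset.sum_add_distrib, Finset.mul_sum]
  refine Finset.sum_le_sum fun r _ => ?_
  have h := prefCount_split ω n k r
  simp only [Fin.snocEquiv, Equiv.coe_fn_mk, Fintype.sum_bool]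
  change (if 2 ≤ prefCount ω n (k + 1) (Fin.snoc r true : Fin (k + 1) → Bool) then 1 else 0)
    + (if 2 ≤ prefCount ω n (k + 1) (Fin.snoc r false : Fin (k + 1) → Bool) then 1 else 0)
    + _ ≤ _
  generalize prefCount ω n (k + 1) (Fin.snoc r true : Fin (k + 1) → Bool) = a at *
  generalize prefCount ω n (k + 1) (Fin.snoc r false : Fin (k + 1) → Bool) = b at *
  generalize prefCount ω n k r = c at *
  split_ifs <;> omega

lemma wordProb_eq_prod (p q : ℝ) {k : ℕ} (r : Fin k → Bool) :
    wordProb p q r = ∏ j, (if r j then p else q) := by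
  unfold wordProb onesCount
  rw [Finset.prod_ite, Finset.prod_const, Finset.prod_const]
  congr 2
  have := Finset.card_filter_add_card_filter_not (s := (Finset.univ : Finset (Fin k)))
    (fun j => r j = true)
  simp only [Finset.card_univ, Fintype.card_fin] at this
  omega

lemma meas_inter_word {p : ℝ} (hp : 0 < p) (hp1 : p < 1)
    {ν : Measure (ℕ → ℕ → Bool)} (hν : IIDBits p ν) (k : ℕ) (r : Fin k → Bool)
    (T : Finset ℕ) :
    ν (⋂ i ∈ T, {ω : ℕ → ℕ → Bool | ∀ j : Fin k, ω i j = r j}) =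
      ENNReal.ofReal (wordProb p (1 - p) r) ^ T.card := by
  have h := hν.2 (T ×ˢ Finset.range k)
    (fun s => if h : s.2 < k then r ⟨s.2, h⟩ else false)
  have e : {ω : ℕ → ℕ → Bool | ∀ s ∈ T ×ˢ Finset.range k, ω s.1 s.2 =
      (fun s : ℕ × ℕ => if h : s.2 < k then r ⟨s.2, h⟩ else false) s} =
      ⋂ i ∈ T, {ω : ℕ → ℕ → Bool | ∀ j : Fin k, ω i j = r j} := by
    ext ω
    simp only [Finset.mem_product, Finset.mem_range, Set.mem_ofPred_eq, Set.mem_iInter]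
    constructor
    · intro h i hi j
      have := h (i, j) ⟨hi, j.2⟩
      simpa using this
    · rintro h ⟨i, j⟩ ⟨hi, hj⟩
      have := h i hi ⟨j, hj⟩
      simp only at hj
      simpa [hj] using this
  rw [← e, h, Finset.prod_product]
  refine Finset.prod_eq_pow_card fun i _ => ?_
  rw [Finset.prod_range, wordProb_eq_prod, ENNReal.ofReal_prod_of_nonneg]
  · simp
  · intro j _
    split_ifs <;> linarith

lemma wordProb_mem {p : ℝ} (hp : 0 < p) (hp1 : p < 1) {k : ℕ} (r : Fin k → Bool) :
    0 ≤ wordProb p (1 - p) r ∧ wordProb p (1 - p) r ≤ 1 := by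
  rw [wordProb_eq_prod]
  refine ⟨Finset.prod_nonneg fun j _ => ?_, Finset.prod_le_one (fun j _ => ?_) fun j _ => ?_⟩ <;>
  split_ifs <;> linarith

/-- Binomial law of the number of strings with a given prefix. -/
lemma meas_prefCount {p : ℝ} (hp : 0 < p) (hp1 : p < 1)
    {ν : Measure (ℕ → ℕ → Bool)} (hν : IIDBits p ν) (k : ℕ) (r : Fin k → Bool) (n m : ℕ) :
    ν.real {ω | prefCount ω n k r = m} =
      n.choose m * (wordProb p (1 - p) r ^ m * (1 - wordProb p (1 - p) r) ^ (n - m)) := by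
  have := hν.1
  obtain ⟨hP0, hP1⟩ := wordProb_mem hp hp1 r
  set P := wordProb p (1 - p) r with hP
  let A : ℕ → Set (ℕ → ℕ → Bool) := fun i => {ω | ∀ j : Fin k, ω i j = r j}
  have hAm : ∀ i, MeasurableSet (A i) := measurableSet_word k r
  have hA : ∀ i, ν (A i) = ENNReal.ofReal P := by
    intro i
    have := meas_inter_word hp hp1 hν k r {i}
    simpa using this
  have hAr : ∀ i, ν.real (A i) = P := fun i => by
    rw [measureReal_def, hA, ENNReal.toReal_ofReal hP0]
  have hind : iIndepSet A ν := by
    rw [iIndepSet_iff_meas_biInter hAm]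
    intro s
    simp_rw [hA, Finset.prod_const]
    exact meas_inter_word hp hp1 hν k r s
  classical
  have hT : ∀ T ∈ (Finset.range n).powersetCard m,
      ν.real (⋂ i ∈ Finset.range n, if i ∈ T then A i else (A i)ᶜ) =
        P ^ m * (1 - P) ^ (n - m) := by
    intro T hT
    rw [Finset.mem_powersetCard] at hT
    have := (iIndepSet_iff A ν).1 hind (Finset.range n)
      (f := fun i => if i ∈ T then A i else (A i)ᶜ) (by
        intro i _
        have : MeasurableSet[MeasurableSpace.generateFrom {A i}] (A i) :=
          MeasurableSpace.measurableSet_generateFrom rfl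
        split_ifs
        · exact this
        · exact this.compl)
    rw [measureReal_def, this, ENNReal.toReal_prod]
    have h2 : ∀ i ∈ Finset.range n, (ν (if i ∈ T then A i else (A i)ᶜ)).toReal =
        if i ∈ T then P else 1 - P := by
      intro i _
      split_ifs
      · exact hAr i
      · have := probReal_compl_eq_one_sub (μ := ν) (hAm i)
        rw [hAr i] at this
        exact this
    rw [Finset.prod_congr rfl h2, Finset.prod_ite, Finset.prod_const, Finset.prod_const]
    have e1 : (Finset.range n).filter (fun i => i ∈ T) = T := by
      rw [Finset.filter_mem_eq_inter]; exact Finset.inter_eq_right.2 hT.1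
    have e2 := Finset.card_filter_add_card_filter_not (s := Finset.range n) (fun i => i ∈ T)
    rw [e1, hT.2, Finset.card_range] at e2
    rw [e1, hT.2]
    congr 2
    omega
  have hU : {ω | prefCount ω n k r = m} =
      ⋃ T ∈ (Finset.range n).powersetCard m,
        ⋂ i ∈ Finset.range n, if i ∈ T then A i else (A i)ᶜ := by
    ext ω
    simp only [Set.mem_ofPred_eq, Set.mem_iUnion, Set.mem_iInter, exists_prop]
    constructor
    · intro h
      refine ⟨(Finset.range n).filter fun i => ∀ j : Fin k, ω i j = r j,
        Finset.mem_powersetCard.2 ⟨Finset.filter_subset _ _, h⟩, fun i hi => ?_⟩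
      split_ifs with h1
      · exact (Finset.mem_filter.1 h1).2
      · intro h2
        exact h1 (Finset.mem_filter.2 ⟨hi, h2⟩)
    · rintro ⟨T, hT, h⟩
      rw [Finset.mem_powersetCard] at hT
      rw [← hT.2]
      unfold prefCount
      congr 1
      ext i
      rw [Finset.mem_filter]
      constructor
      · rintro ⟨h1, h2⟩
        by_contra h3
        have := h i h1
        rw [if_neg h3] at this
        exact this h2
      · intro h1
        have := h i (hT.1 h1)
        rw [if_pos h1] at this
        exact ⟨hT.1 h1, this⟩
  rw [hU, measureReal_biUnion_finset, Finset.sum_congr rfl hT, Finset.sum_const,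
    Finset.card_powersetCard, Finset.card_range, nsmul_eq_mul]
  · intro T hT T' hT' hne
    have hT := Finset.mem_powersetCard.1 hT
    have hT' := Finset.mem_powersetCard.1 hT'
    refine Set.disjoint_left.2 fun ω h1 h2 => hne ?_
    simp only [Set.mem_iInter] at h1 h2
    ext i
    constructor
    · intro hi
      by_contra hi'
      have a := h1 i (hT.1 hi)
      have b := h2 i (hT.1 hi)
      rw [if_pos hi] at a
      rw [if_neg hi'] at b
      exact b a
    · intro hi
      by_contra hi'
      have a := h1 i (hT'.1 hi)
      have b := h2 i (hT'.1 hi)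
      rw [if_neg hi'] at a
      rw [if_pos hi] at b
      exact a b
  · intro T _
    refine Finset.measurableSet_biInter _ fun i _ => ?_
    split_ifs
    · exact hAm i
    · exact (hAm i).compl

lemma hasSum_thin (l P : ℝ) (m : ℕ) :
    HasSum (fun n : ℕ => (Real.exp (-l) * l ^ n / (n.factorial : ℝ)) *
      (n.choose m * (P ^ m * (1 - P) ^ (n - m))))
      (Real.exp (-(l * P)) * (l * P) ^ m / (m.factorial : ℝ)) := by
  have h0 : ∀ n ∉ Set.range (fun i : ℕ => i + m),
      (Real.exp (-l) * l ^ n / (n.factorial : ℝ)) *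
        (n.choose m * (P ^ m * (1 - P) ^ (n - m))) = 0 := by
    intro n hn
    have : n < m := by
      by_contra h
      exact hn ⟨n - m, by simp only; omega⟩
    simp [Nat.choose_eq_zero_of_lt this]
  rw [← Function.Injective.hasSum_iff (add_left_injective m) h0]
  have h := (NormedSpace.expSeries_div_hasSum_exp (l * (1 - P))).mul_left
    (Real.exp (-l) * (l * P) ^ m / (m.factorial : ℝ))
  convert! h using 1
  · ext i
    simp only [Function.comp, Nat.add_sub_cancel]
    have : ((i + m).choose m : ℝ) * i.factorial * m.factorial = (i + m).factorial := by
      have h := Nat.choose_mul_factorial_mul_factorial (Nat.le_add_left m i)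
      rw [Nat.add_sub_cancel] at h
      rw [← h]
      push_cast
      ring
    rw [← this, mul_pow l (1 - P) i]
    have h3 : ((i + m).choose m : ℝ) ≠ 0 := by
      exact_mod_cast (Nat.choose_pos (by omega)).ne'
    field_simp
    ring
  · rw [← Real.exp_eq_exp_ℝ]
    have : Real.exp (-(l * P)) = Real.exp (-l) * Real.exp (l * (1 - P)) := by
      rw [← Real.exp_add]; ring_nf
    rw [this]; ring

lemma measurableSet_prefEq (k : ℕ) (r : Fin k → Bool) (m : ℕ) :
    MeasurableSet {ω : ℕ × (ℕ → ℕ → Bool) | prefCount ω.2 ω.1 k r = m} := by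
  have : Measurable fun ω : ℕ × (ℕ → ℕ → Bool) => prefCount ω.2 ω.1 k r :=
    measurable_from_prod_countable_right fun n => measurable_prefCount n k r
  exact this (measurableSet_singleton m)

lemma poModel_prefCount {p : ℝ} (hp : 0 < p) (hp1 : p < 1) (lam : NNReal)
    {ν : Measure (ℕ → ℕ → Bool)} (hν : IIDBits p ν) (k : ℕ) (r : Fin k → Bool) (m : ℕ) :
    (poModel lam ν).real {ω | prefCount ω.2 ω.1 k r = m} =
      poissonPMFReal (lam * (wordProb p (1 - p) r).toNNReal) m := by
  have := hν.1
  unfold poModel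
  have hm := measurableSet_prefEq k r m
  rw [← integral_indicator_one hm, integral_prod
      (Set.indicator {ω : ℕ × (ℕ → ℕ → Bool) | prefCount ω.2 ω.1 k r = m} 1)
    ((integrable_const (1 : ℝ)).indicator hm), integral_poissonMeasure]
  have : ∀ n : ℕ, ∫ y, Set.indicator {ω : ℕ × (ℕ → ℕ → Bool) | prefCount ω.2 ω.1 k r = m}
      (1 : ℕ × (ℕ → ℕ → Bool) → ℝ) (n, y) ∂ν = ν.real {ω | prefCount ω n k r = m} := by
    intro n
    have hn : MeasurableSet {ω | prefCount ω n k r = m} :=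
      measurable_prefCount n k r (measurableSet_singleton m)
    rw [← integral_indicator_one hn]
    rfl
  simp_rw [this, meas_prefCount hp hp1 hν, smul_eq_mul]
  rw [(hasSum_thin _ _ _).tsum_eq, poissonPMFReal]
  simp [Real.coe_toNNReal _ (wordProb_mem hp hp1 r).1]

/-- In the Poissonized model:
`E[2 X_k(λ) - X_{k+1}(λ)] ≥ Σ_{r ∈ {0,1}^k} P(Po(λ P_r) = 2)`. -/
theorem expectation_two_fillCountPo_sub
    (p q : ℝ) (hp : 0 < p) (hp1 : p < 1) (hq : q = 1 - p)
    (lam : NNReal) (hlam : 0 < lam)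
    (ν : Measure (ℕ → ℕ → Bool)) (hν : IIDBits p ν) (k : ℕ) :
    (∑ r : Fin k → Bool,
        ProbabilityTheory.poissonPMFReal (lam * (wordProb p q r).toNNReal) 2) ≤
      ∫ ω, (2 * (fillCountPo k ω : ℝ) - (fillCountPo (k + 1) ω : ℝ)) ∂poModel lam ν := by
  subst hq
  have := hν.1
  have : IsProbabilityMeasure (poModel lam ν) := by unfold poModel; infer_instance
  have hint : ∀ j, Integrable (fun ω => (fillCountPo j ω : ℝ)) (poModel lam ν) := by
    intro j
    refine Integrable.of_bound (C := 2 ^ j)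
      (measurable_from_top.comp (measurable_fillCountPo j)).aestronglyMeasurable
      (ae_of_all _ fun ω => ?_)
    rw [Real.norm_natCast]
    exact_mod_cast fillCountPo_le j ω
  have hI : ∀ r : Fin k → Bool, Integrable (Set.indicator
      {ω : ℕ × (ℕ → ℕ → Bool) | prefCount ω.2 ω.1 k r = 2}
      (1 : ℕ × (ℕ → ℕ → Bool) → ℝ)) (poModel lam ν) := fun r =>
    (integrable_const (1 : ℝ)).indicator (measurableSet_prefEq k r 2)
  simp_rw [← poModel_prefCount hp hp1 lam hν k _ 2,
    ← integral_indicator_one (measurableSet_prefEq k _ 2)]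
  rw [← integral_finsetSum _ fun r _ => hI r]
  refine integral_mono (integrable_finsetSum _ fun r _ => hI r)
    (((hint k).const_mul 2).sub (hint (k + 1))) fun ω => ?_
  have h := pointwise_bound ω.2 ω.1 k
  have h' : (fillCount ω.2 ω.1 (k + 1) : ℝ) + ∑ r : Fin k → Bool,
      (if prefCount ω.2 ω.1 k r = 2 then (1 : ℝ) else 0) ≤ 2 * fillCount ω.2 ω.1 k := by
    exact_mod_cast h
  simp only [Set.indicator_apply, Set.mem_ofPred_eq, Pi.one_apply, fillCountPo]
  linarith
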